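/- arXiv:0801.0056 — 7 statements merged into one kernel-verified Lean document; each statement's English description precedes it below -/
import Mathlib

section
/- For every n ≥ 1, the polynomial Q_{2n}(x) lies in the ℚ-linear span of the polynomials Q_1(x), Q_3(x), …, Q_{2n−1}(x). -/
open Polynomial

/-- Q_n(x) = 2x^n - (x+1)^n - 2(1-x)^n + (-x)^n. -/
noncomputable def Qpoly (n : ℕ) : Polynomial ℚ :=
  2 * X ^ n - (X + 1) ^ n - 2 * (1 - X) ^ n + (-X) ^ n

theorem Qpoly_aux_sum (y : Polynomial ℚ) (n : ℕ) :
    ∑ k ∈ Finset.range (n + 1), ((n.choose k : ℚ) * (-1) ^ k) • y ^ k = (1 - y) ^ n := by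
  rw [sub_eq_add_neg, add_comm (1 : Polynomial ℚ) (-y), add_pow]
  refine Finset.sum_congr rfl fun k _ => ?_
  rw [Polynomial.smul_eq_C_mul, neg_pow y]
  simp
  ring

theorem Qpoly_aux_rec (n : ℕ) :
    ∑ k ∈ Finset.range (n + 1), ((n.choose k : ℚ) * (-1) ^ k) • Qpoly k = - Qpoly n := by
  have h : ∀ k, ((n.choose k : ℚ) * (-1) ^ k) • Qpoly k =
      2 * (((n.choose k : ℚ) * (-1) ^ k) • (X : Polynomial ℚ) ^ k)
      - ((n.choose k : ℚ) * (-1) ^ k) • (X + 1 : Polynomial ℚ) ^ k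
      - 2 * (((n.choose k : ℚ) * (-1) ^ k) • (1 - X : Polynomial ℚ) ^ k)
      + ((n.choose k : ℚ) * (-1) ^ k) • (-X : Polynomial ℚ) ^ k := by
    intro k
    simp only [Qpoly, Polynomial.smul_eq_C_mul]
    ring
  simp only [h, Finset.sum_add_distrib, Finset.sum_sub_distrib, ← Finset.mul_sum, Qpoly_aux_sum]
  have h1 : (1 - (X + 1) : Polynomial ℚ) = -X := by ring
  have h2 : (1 - (1 - X) : Polynomial ℚ) = X := by ring
  have h3 : (1 - -X : Polynomial ℚ) = X + 1 := by ring
  rw [h1, h2, h3, Qpoly]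
  ring

theorem Qpoly_aux_mem (n k : ℕ) (hk : k ≤ 2 * n) :
    Qpoly k ∈ Submodule.span ℚ
      {p : Polynomial ℚ | ∃ k, 1 ≤ k ∧ k ≤ n ∧ p = Qpoly (2 * k - 1)} := by
  induction k using Nat.strong_induction_on with
  | _ k ih =>
    rcases Nat.even_or_odd k with he | ho
    · have h := Qpoly_aux_rec k
      rw [Finset.sum_range_succ, he.neg_one_pow] at h
      simp only [Nat.choose_self, Nat.cast_one, mul_one, one_smul] at h
      have h2 : Qpoly k = (-(1 / 2) : ℚ) •
          ∑ j ∈ Finset.range k, ((k.choose j : ℚ) * (-1) ^ j) • Qpoly j := by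
        rw [eq_sub_of_add_eq h]
        module
      rw [h2]
      refine Submodule.smul_mem _ _ (Submodule.sum_mem _ fun j hj => Submodule.smul_mem _ _ ?_)
      have hj := Finset.mem_range.mp hj
      exact ih j hj (by omega)
    · obtain ⟨m, rfl⟩ := ho
      exact Submodule.subset_span ⟨m + 1, by omega, by omega, rfl⟩

/-- For n ≥ 1, Q_{2n} lies in the ℚ-span of Q_1, Q_3, ..., Q_{2n-1}. -/
theorem Qpoly_even_in_span_of_odd (n : ℕ) (hn : 1 ≤ n) :
    Qpoly (2 * n) ∈ Submodule.span ℚ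
      {p : Polynomial ℚ | ∃ k, 1 ≤ k ∧ k ≤ n ∧ p = Qpoly (2 * k - 1)} := by
  exact Qpoly_aux_mem n (2 * n) le_rfl
end

section
/- For every n ≥ 1, Q_{2n}(0) = −3, the rational function (Q_{2n}(x) + 3)/x is a polynomial Q̂_{2n}(x) of degree 2n−2, and Q̂_{2n} is reciprocal: Q̂_{2n}(x) = x^{2n−2} · Q̂_{2n}(1/x) as polynomials, i.e. its coefficient sequence is palindromic. -/
open Polynomial

lemma Qpoly_even_coeff (n k : ℕ) :
    (Qpoly (2 * n)).coeff k = (if k = 2 * n then 3 else 0) - ((2 * n).choose k : ℚ)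
      - 2 * ((-1) ^ (2 * n - k) * ((2 * n).choose k : ℚ)) := by
  have h : Qpoly (2 * n) = C 3 * X ^ (2 * n) - (X + 1) ^ (2 * n)
      - C 2 * (X + C (-1)) ^ (2 * n) := by
    have h1 : (1 - X : ℚ[X]) ^ (2 * n) = (X + C (-1)) ^ (2 * n) := by
      rw [← Even.neg_pow (even_two_mul n) (1 - X : ℚ[X])]
      congr 1
      simp only [map_neg, map_one]
      ring
    have h3 : (C 3 : ℚ[X]) = 3 := rfl
    have h2 : (C 2 : ℚ[X]) = 2 := rfl
    rw [Qpoly, h1, Even.neg_pow (even_two_mul n), h3, h2]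
    ring
  rw [h, coeff_sub, coeff_sub, coeff_C_mul, coeff_C_mul, coeff_X_add_one_pow,
    coeff_X_add_C_pow, coeff_X_pow]
  simp

/-- For n ≥ 1, Q_{2n}(0) = -3, (Q_{2n}(x)+3)/x is a polynomial of degree 2n-2,
    and this polynomial is reciprocal (palindromic coefficients). -/
theorem Qpoly_even_reciprocal (n : ℕ) (hn : 1 ≤ n) :
    (Qpoly (2 * n)).eval 0 = -3 ∧
    ∃ Qhat : Polynomial ℚ,
      X * Qhat = Qpoly (2 * n) + 3 ∧
      Qhat.degree = (2 * n - 2 : ℕ) ∧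
      ∀ i ≤ 2 * n - 2, Qhat.coeff i = Qhat.coeff (2 * n - 2 - i) := by
  have h0 : (Qpoly (2 * n)).coeff 0 = -3 := by
    rw [Qpoly_even_coeff, if_neg (by omega)]
    simp
    norm_num
  have hc : ∀ i, (divX (Qpoly (2 * n) + 3)).coeff i = (Qpoly (2 * n)).coeff (i + 1) := by
    intro i
    have h3 : (3 : ℚ[X]) = C 3 := rfl
    rw [coeff_divX, coeff_add, h3, coeff_C_succ, add_zero]
  refine ⟨by rw [← coeff_zero_eq_eval_zero, h0], divX (Qpoly (2 * n) + 3), ?_, ?_, ?_⟩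
  · have h := X_mul_divX_add (Qpoly (2 * n) + 3)
    have h3 : (3 : ℚ[X]) = C 3 := rfl
    have : (Qpoly (2 * n) + 3).coeff 0 = 0 := by
      rw [coeff_add, h0, h3, coeff_C_zero]; norm_num
    rwa [this, map_zero, add_zero] at h
  · apply le_antisymm
    · rw [degree_le_iff_coeff_zero]
      intro m hm
      have hm' : 2 * n - 2 < m := by exact_mod_cast hm
      rw [hc, Qpoly_even_coeff]
      by_cases h : m + 1 = 2 * n
      · rw [if_pos h, h]
        simp
        norm_num
      · rw [if_neg h, Nat.choose_eq_zero_of_lt (by omega)]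
        simp
    · apply le_degree_of_ne_zero
      rw [hc, Qpoly_even_coeff, if_neg (by omega),
        show 2 * n - (2 * n - 2 + 1) = 1 by omega,
        ← Nat.choose_symm (by omega), show 2 * n - (2 * n - 2 + 1) = 1 by omega]
      simp
      intro h
      have : (1 : ℚ) ≤ n := by exact_mod_cast hn
      linarith
  · intro i hi
    rw [hc, hc, Qpoly_even_coeff, Qpoly_even_coeff, if_neg (by omega), if_neg (by omega),
      ← Nat.choose_symm (show i + 1 ≤ 2 * n by omega),
      show 2 * n - 2 - i + 1 = 2 * n - (i + 1) by omega,
      show 2 * n - (2 * n - (i + 1)) = i + 1 by omega]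
    have : (-1 : ℚ) ^ (2 * n - (i + 1)) = (-1) ^ (i + 1) := by
      apply neg_one_pow_congr
      rw [Nat.even_sub (by omega)]
      simp
    rw [this]
end

section
/- For each integer J ≥ 1 there exists a unique sequence of positive real numbers c₁, …, c_J satisfying c₁ = 1/c₁ + c₂ = 1/c₂ + c₃ = ⋯ = 1/c_{J−1} + c_J = 1/c_J (i.e. all J of these expressions are equal to c₁). This sequence is strictly decreasing and is given explicitly by c_j = sin((j+1)π/(J+2)) / sin(jπ/(J+2)) for j = 1, …, J; in particular c₁ = 2cos(π/(J+2)). -/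
theorem chain_lt (J : ℕ) (hJ : 1 ≤ J) (c d : ℕ → ℝ)
    (hc : ∀ j, 1 ≤ j → j ≤ J → 0 < c j)
    (hc1 : ∀ j, 1 ≤ j → j ≤ J - 1 → c 1 = 1 / c j + c (j + 1))
    (hc2 : c 1 = 1 / c J)
    (hd1 : ∀ j, 1 ≤ j → j ≤ J - 1 → d 1 = 1 / d j + d (j + 1))
    (hd2 : d 1 = 1 / d J) : ¬ c 1 < d 1 := by
  intro h
  have key : ∀ j, 1 ≤ j → j ≤ J → c j < d j := by
    intro j hj
    induction j, hj using Nat.le_induction with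
    | base => intro _; exact h
    | succ j hj ih =>
      intro hjJ
      have h1 := ih (by omega)
      have h2 := one_div_lt_one_div_of_lt (hc j hj (by omega)) h1
      have h3 := hc1 j hj (by omega)
      have h4 := hd1 j hj (by omega)
      linarith
  have h2 := one_div_lt_one_div_of_lt (hc J hJ le_rfl) (key J hJ le_rfl)
  linarith

/-- For each J ≥ 1 there is a unique sequence of positive reals c₁,…,c_J with
    c₁ = 1/c₁ + c₂ = ⋯ = 1/c_{J-1} + c_J = 1/c_J; it is strictly decreasing and
    c_j = sin((j+1)π/(J+2))/sin(jπ/(J+2)); in particular c₁ = 2cos(π/(J+2)). -/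
theorem chebyshev_chain_sequence (J : ℕ) (hJ : 1 ≤ J) :
    ∃ c : ℕ → ℝ,
      ((∀ j, 1 ≤ j → j ≤ J → 0 < c j) ∧
       (∀ j, 1 ≤ j → j ≤ J - 1 → c 1 = 1 / c j + c (j + 1)) ∧
       c 1 = 1 / c J) ∧
      (∀ j, 1 ≤ j → j ≤ J →
        c j = Real.sin (((j : ℝ) + 1) * Real.pi / ((J : ℝ) + 2)) /
              Real.sin ((j : ℝ) * Real.pi / ((J : ℝ) + 2))) ∧
      c 1 = 2 * Real.cos (Real.pi / ((J : ℝ) + 2)) ∧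
      (∀ j k, 1 ≤ j → j < k → k ≤ J → c k < c j) ∧
      (∀ c' : ℕ → ℝ,
        ((∀ j, 1 ≤ j → j ≤ J → 0 < c' j) ∧
         (∀ j, 1 ≤ j → j ≤ J - 1 → c' 1 = 1 / c' j + c' (j + 1)) ∧
         c' 1 = 1 / c' J) →
        ∀ j, 1 ≤ j → j ≤ J → c' j = c j) := by
  have hJ0 : (0 : ℝ) < (J : ℝ) + 2 := by positivity
  obtain ⟨t, ht⟩ : ∃ t : ℝ, t = Real.pi / ((J : ℝ) + 2) := ⟨_, rfl⟩
  have ht0 : 0 < t := by rw [ht]; exact div_pos Real.pi_pos hJ0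
  have htJ : ((J : ℝ) + 2) * t = Real.pi := by rw [ht]; field_simp
  have e1 : ∀ x : ℝ, x * Real.pi / ((J : ℝ) + 2) = x * t := by
    intro x; rw [ht]; ring
  have hpos : ∀ x : ℝ, 0 < x → x < (J : ℝ) + 2 → 0 < Real.sin (x * t) := by
    intro x h0 h1
    apply Real.sin_pos_of_pos_of_lt_pi (by positivity)
    rw [← htJ]
    exact mul_lt_mul_of_pos_right h1 ht0
  have hposn : ∀ j : ℕ, 1 ≤ j → j ≤ J + 1 → 0 < Real.sin ((j : ℝ) * t) := by
    intro j h0 h1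
    have h0' : (1 : ℝ) ≤ j := by exact_mod_cast h0
    have h1' : (j : ℝ) ≤ J + 1 := by exact_mod_cast h1
    exact hpos _ (by linarith) (by linarith)
  have hposs : ∀ j : ℕ, j ≤ J → 0 < Real.sin (((j : ℝ) + 1) * t) := by
    intro j h1
    have := hposn (j + 1) (by omega) (by omega)
    push_cast at this
    exact this
  have hst : 0 < Real.sin t := by
    have := hposn 1 le_rfl (by omega)
    simpa using this
  have hrec : ∀ x : ℝ, Real.sin (x * t) + Real.sin ((x + 1 + 1) * t)
      = 2 * Real.cos t * Real.sin ((x + 1) * t) := by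
    intro x
    have h1 : x * t = (x + 1) * t - t := by ring
    have h2 : (x + 1 + 1) * t = (x + 1) * t + t := by ring
    rw [h1, h2, Real.sin_sub, Real.sin_add]; ring
  obtain ⟨c, hcdef⟩ : ∃ c : ℕ → ℝ, ∀ j, c j =
      Real.sin (((j : ℝ) + 1) * t) / Real.sin ((j : ℝ) * t) := ⟨fun j => _, fun j => rfl⟩
  have hc1 : c 1 = 2 * Real.cos t := by
    rw [hcdef]
    have : ((1 : ℕ) + 1 : ℝ) * t = 2 * t := by push_cast; ring
    rw [this, Real.sin_two_mul]
    simp only [Nat.cast_one, one_mul]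
    field_simp
  have hcpos : ∀ j, 1 ≤ j → j ≤ J → 0 < c j := by
    intro j h0 h1
    rw [hcdef]
    exact div_pos (hposs j h1) (hposn j h0 (by omega))
  have hstep : ∀ j, 1 ≤ j → j ≤ J → c 1 = 1 / c j + c (j + 1) := by
    intro j h0 h1
    rw [hc1, hcdef, hcdef, one_div_div]
    push_cast
    rw [← add_div, hrec, mul_div_assoc, div_self (hposs j h1).ne', mul_one]
  have hend : c 1 = 1 / c J := by
    rw [hstep J hJ le_rfl, hcdef (J + 1)]
    have : (((J + 1 : ℕ) : ℝ) + 1) * t = Real.pi := by rw [← htJ]; push_cast; ring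
    rw [this, Real.sin_pi]; simp
  refine ⟨c, ⟨hcpos, fun j h0 h1 => hstep j h0 (by omega), hend⟩, ?_, ?_, ?_, ?_⟩
  · intro j _ _
    rw [e1, e1, hcdef]
  · rw [← ht, hc1]
  · intro j k hj hjk hk
    rw [hcdef, hcdef, div_lt_div_iff₀ (hposn k (by omega) (by omega)) (hposn j hj (by omega))]
    have h := hposn (k - j) (by omega) (by omega)
    rw [Nat.cast_sub hjk.le, sub_mul, Real.sin_sub] at h
    have h2 := mul_pos h hst
    rw [add_mul, add_mul, one_mul, Real.sin_add, Real.sin_add]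
    nlinarith [h2]
  · rintro d ⟨hd, hd1, hd2⟩
    have hs : ∀ j, 1 ≤ j → j ≤ J - 1 → c 1 = 1 / c j + c (j + 1) :=
      fun j h0 h1 => hstep j h0 (by omega)
    have heq : d 1 = c 1 := le_antisymm
      (not_lt.mp (chain_lt J hJ c d hcpos hs hend hd1 hd2))
      (not_lt.mp (chain_lt J hJ d c hd hd1 hd2 hs hend))
    intro j hj
    induction j, hj using Nat.le_induction with
    | base => intro _; exact heq
    | succ j hj ih =>
      intro hjJ
      have h1 := ih (by omega)
      have h3 := hs j hj (by omega)
      have h4 := hd1 j hj (by omega)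
      rw [h1] at h4
      linarith
end

section
/- Let f : [0,1] → ℂ be continuous and suppose f(x) = Σ_{n=1}^∞ 2^{−n} f(1/(x+n)) for all x ∈ [0,1]. Then f is constant on [0,1]. -/
open Set

/-- A continuous f : [0,1] → ℂ with f(x) = Σ_{n≥1} 2^{-n} f(1/(x+n)) on [0,1]
    is constant on [0,1]. -/
theorem fixed_points_of_transfer_are_constant
    (f : ℝ → ℂ) (hf : ContinuousOn f (Icc 0 1))
    (heq : ∀ x ∈ Icc (0:ℝ) 1,
      f x = ∑' n : ℕ, ((2:ℂ))⁻¹ ^ (n + 1) * f (1 / (x + n + 1))) :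
    ∃ c : ℂ, ∀ x ∈ Icc (0:ℝ) 1, f x = c := by
  have h0 : (0:ℝ) ∈ Icc (0:ℝ) 1 := by simp
  have hg : ContinuousOn (fun x => ‖f x - f 0‖) (Icc 0 1) :=
    (hf.sub continuousOn_const).norm
  obtain ⟨x, hx, hmax⟩ := isCompact_Icc.exists_isMaxOn ⟨0, h0⟩ hg
  have hmax' : ∀ y ∈ Icc (0:ℝ) 1, ‖f y - f 0‖ ≤ ‖f x - f 0‖ := fun y hy => hmax hy
  have hmem : ∀ n : ℕ, 1 / (x + n + 1) ∈ Icc (0:ℝ) 1 := by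
    intro n
    have h1 := hx.1
    have h2 : (0:ℝ) ≤ n := n.cast_nonneg
    refine ⟨by positivity, ?_⟩
    rw [div_le_one (by positivity)]
    linarith
  have hw : HasSum (fun n : ℕ => ((2:ℝ))⁻¹ ^ (n + 1)) 1 := by
    have := (hasSum_geometric_of_lt_one (r := (2:ℝ)⁻¹) (by norm_num) (by norm_num)).mul_left
      (2:ℝ)⁻¹
    have h1 : (2:ℝ)⁻¹ * (1 - 2⁻¹)⁻¹ = 1 := by norm_num
    rw [h1] at this
    simpa only [pow_succ'] using this
  have hwc : HasSum (fun n : ℕ => ((2:ℂ))⁻¹ ^ (n + 1)) 1 := by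
    have := Complex.hasSum_ofReal.mpr hw
    simpa using this
  have hM : ‖f x - f 0‖ = 0 := by
    by_contra hne
    have hpos : 0 < ‖f x - f 0‖ := lt_of_le_of_ne (norm_nonneg _) (Ne.symm hne)
    have hlim : Filter.Tendsto (fun n : ℕ => 1 / (x + n + 1)) Filter.atTop (nhds 0) := by
      have h3 : Filter.Tendsto (fun n : ℕ => x + n + 1) Filter.atTop Filter.atTop :=
        Filter.tendsto_atTop_add_const_right _ _
          (Filter.tendsto_atTop_add_const_left _ _ tendsto_natCast_atTop_atTop)
      simp only [one_div]
      exact h3.inv_tendsto_atTop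
    have hlim2 : Filter.Tendsto (fun n : ℕ => 1 / (x + n + 1)) Filter.atTop
        (nhdsWithin 0 (Icc 0 1)) :=
      tendsto_nhdsWithin_iff.mpr ⟨hlim, Filter.Eventually.of_forall hmem⟩
    have hlim3 := (hg 0 h0).tendsto.comp hlim2
    have hev := hlim3.eventually_lt_const (u := ‖f x - f 0‖) (by rw [sub_self, norm_zero]; exact hpos)
    obtain ⟨N, hN⟩ := hev.exists
    simp only [Function.comp] at hN
    have hsM := hw.mul_right ‖f x - f 0‖
    have hle : ∀ n : ℕ, ((2:ℝ))⁻¹ ^ (n + 1) * ‖f (1 / (x + n + 1)) - f 0‖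
        ≤ ((2:ℝ))⁻¹ ^ (n + 1) * ‖f x - f 0‖ := fun n =>
      mul_le_mul_of_nonneg_left (hmax' _ (hmem n)) (by positivity)
    have hs : Summable (fun n : ℕ => ((2:ℝ))⁻¹ ^ (n + 1) * ‖f (1 / (x + n + 1)) - f 0‖) :=
      Summable.of_nonneg_of_le (fun n => by positivity) hle hsM.summable
    have hlt := Summable.tsum_lt_tsum (i := N) hle
      (mul_lt_mul_of_pos_left hN (by positivity)) hs hsM.summable
    rw [hsM.tsum_eq, one_mul] at hlt
    have hnorm : ∀ n : ℕ, ‖((2:ℂ))⁻¹ ^ (n + 1) * (f (1 / (x + n + 1)) - f 0)‖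
        = ((2:ℝ))⁻¹ ^ (n + 1) * ‖f (1 / (x + n + 1)) - f 0‖ := fun n => by simp
    have hs' : Summable (fun n : ℕ => ‖((2:ℂ))⁻¹ ^ (n + 1) * (f (1 / (x + n + 1)) - f 0)‖) := by
      simpa only [hnorm] using hs
    have hsum : f x - f 0 = ∑' n : ℕ, ((2:ℂ))⁻¹ ^ (n + 1) * (f (1 / (x + n + 1)) - f 0) := by
      have h5 := hs'.of_norm.hasSum.add (hwc.mul_right (f 0))
      have h6 := h5.tsum_eq
      simp only [← mul_add, sub_add_cancel, one_mul] at h6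
      rw [← heq x hx] at h6
      rw [h6]; ring
    have h7 := norm_tsum_le_tsum_norm hs'
    rw [← hsum] at h7
    simp only [hnorm] at h7
    exact absurd hlt (not_lt.mpr h7)
  refine ⟨f 0, fun y hy => ?_⟩
  have h8 := hmax' y hy
  rw [hM] at h8
  exact sub_eq_zero.mp (norm_le_zero_iff.mp h8)
end

section
/- For each integer n ≥ 1 there exists a unique monic polynomial P_n of degree n satisfying the functional equation 2·P_n(1−2y) − P_n(1−y) = (1/δ_n)·P_n(y) identically in y, where δ_n = (−1)^n/(2^{n+1}−1). For example P₁(y) = y − 1/4 and P₂(y) = y² − (3/5)y + 1/15. -/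
open Polynomial

/-- P is a monic polynomial of degree n satisfying
    2·P(1-2y) - P(1-y) = (-1)^n (2^{n+1}-1) · P(y). -/
def PProp (n : ℕ) (P : Polynomial ℚ) : Prop :=
  P.Monic ∧ P.natDegree = n ∧
    2 * P.comp (1 - 2 * X) - P.comp (1 - X) =
      C ((-1) ^ n * (2 ^ (n + 1) - 1) : ℚ) * P

lemma aux_comp (p : ℚ[X]) (a : ℚ) (ha : a ≠ 0) (m : ℕ) (hp : p.natDegree ≤ m) :
    (p.comp (C a * X + C 1)).natDegree ≤ m ∧
    (p.comp (C a * X + C 1)).coeff m = p.coeff m * a ^ m := by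
  have hq : (C a * X + C 1 : ℚ[X]).natDegree = 1 := natDegree_linear ha
  have hl : (C a * X + C 1 : ℚ[X]).leadingCoeff = a := leadingCoeff_linear ha
  have hd : (p.comp (C a * X + C 1)).natDegree = p.natDegree := by
    rw [natDegree_comp, hq, mul_one]
  refine ⟨hd.le.trans hp, ?_⟩
  rcases hp.lt_or_eq with h | h
  · rw [coeff_eq_zero_of_natDegree_lt (hd ▸ h), coeff_eq_zero_of_natDegree_lt h, zero_mul]
  · have := coeff_comp_degree_mul_degree (p := p) (q := C a * X + C 1) (by rw [hq]; simp)
    rw [hq, hl, mul_one, h] at this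
    rw [this, leadingCoeff, h]

noncomputable def auxL (n : ℕ) (p : ℚ[X]) : ℚ[X] :=
  2 * p.comp (1 - 2 * X) - p.comp (1 - X) - C ((-1) ^ n * (2 ^ (n + 1) - 1) : ℚ) * p

lemma auxL_add (n : ℕ) (p q : ℚ[X]) : auxL n (p + q) = auxL n p + auxL n q := by
  simp only [auxL, add_comp]; ring

lemma auxL_sub (n : ℕ) (p q : ℚ[X]) : auxL n (p - q) = auxL n p - auxL n q := by
  simp only [auxL, sub_comp]; ring

def auxE (n : ℕ) : ℚ := (-1) ^ n * (2 ^ (n + 1) - 1)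

lemma auxE_ne {m n : ℕ} (h : m < n) : auxE m - auxE n ≠ 0 := by
  intro h0
  have h1 : |auxE m| = |auxE n| := by rw [sub_eq_zero.mp h0]
  have key : ∀ k, |auxE k| = 2 ^ (k + 1) - 1 := by
    intro k
    have : (1 : ℚ) ≤ 2 ^ (k + 1) := one_le_pow₀ (by norm_num)
    rw [auxE, abs_mul, abs_pow, abs_neg, abs_one, one_pow, one_mul, abs_of_nonneg (by linarith)]
  rw [key, key] at h1
  have : (2 : ℚ) ^ (m + 1) < 2 ^ (n + 1) := pow_lt_pow_right₀ (by norm_num) (by omega)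
  linarith

lemma auxL_spec (n m : ℕ) (p : ℚ[X]) (hp : p.natDegree ≤ m) :
    (auxL n p).natDegree ≤ m ∧ (auxL n p).coeff m = (auxE m - auxE n) * p.coeff m := by
  have e1 : (1 - 2 * X : ℚ[X]) = C (-2) * X + C 1 := by
    rw [map_neg, map_one, show (C 2 : ℚ[X]) = 2 from rfl]; ring
  have e2 : (1 - X : ℚ[X]) = C (-1) * X + C 1 := by
    simp only [map_neg, map_one]; ring
  have e3 : (2 : ℚ[X]) = C 2 := rfl
  obtain ⟨a1, a2⟩ := aux_comp p (-2) (by norm_num) m hp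
  obtain ⟨b1, b2⟩ := aux_comp p (-1) (by norm_num) m hp
  have hL : auxL n p = C 2 * p.comp (C (-2) * X + C 1) - p.comp (C (-1) * X + C 1)
      - C (auxE n) * p := by rw [auxL, e1, e2, e3, auxE]
  rw [hL]
  constructor
  · refine (natDegree_sub_le_of_le (m := m) (n := m) (natDegree_sub_le_of_le (m := m) (n := m) ?_ b1 |>.trans (by simp)) ?_).trans (by simp)
    · exact (natDegree_C_mul_le _ _).trans a1
    · exact (natDegree_C_mul_le _ _).trans hp
  · rw [coeff_sub, coeff_sub, coeff_C_mul, coeff_C_mul, a2, b2]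
    have : (-2 : ℚ) ^ m = (-1) ^ m * 2 ^ m := by rw [← mul_pow]; norm_num
    simp only [this, auxE, pow_succ]; ring

lemma aux_deg_lt {p : ℚ[X]} {m : ℕ} (h : p.natDegree ≤ m) (h0 : p.coeff m = 0) :
    p.degree < m := by
  rw [degree_lt_iff_coeff_zero]
  intro k hk
  rcases hk.lt_or_eq with h1 | h1
  · exact coeff_eq_zero_of_natDegree_lt (by omega)
  · rw [← h1, h0]

lemma aux_le {p : ℚ[X]} {m : ℕ} (h : p.degree < (m + 1 : ℕ)) : p.natDegree ≤ m := by
  rw [natDegree_le_iff_coeff_eq_zero]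
  intro k hk
  exact (degree_lt_iff_coeff_zero _ _).1 h k hk

lemma aux_surj (n m : ℕ) (hm : m ≤ n) : ∀ q : ℚ[X], q.degree < m →
    ∃ r : ℚ[X], r.degree < m ∧ auxL n r = q := by
  induction m with
  | zero =>
    intro q hq
    have : q = 0 := by
      ext k; simpa using (degree_lt_iff_coeff_zero _ _).1 hq k (Nat.zero_le _)
    exact ⟨0, by simp, by simp [this, auxL]⟩
  | succ m ih =>
    intro q hq
    have hne := auxE_ne (show m < n by omega)
    set s : ℚ[X] := C (q.coeff m / (auxE m - auxE n)) * X ^ m with hs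
    have hsd : s.natDegree ≤ m := natDegree_C_mul_X_pow_le _ _
    obtain ⟨h1, h2⟩ := auxL_spec n m s hsd
    have hsc : s.coeff m = q.coeff m / (auxE m - auxE n) := by simp [hs]
    obtain ⟨r, hr, hr'⟩ := ih (by omega) (q - auxL n s) (by
      apply aux_deg_lt
      · exact (natDegree_sub_le_of_le (aux_le hq) h1).trans (by simp)
      · rw [coeff_sub, h2, hsc]; field_simp; ring)
    refine ⟨s + r, ?_, by rw [auxL_add, hr']; ring⟩
    have hlt : ((m : ℕ) : WithBot ℕ) < ((m + 1 : ℕ) : WithBot ℕ) := by exact_mod_cast Nat.lt_succ_self m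
    refine (degree_add_le _ _).trans_lt (max_lt ?_ (hr.trans hlt))
    exact (degree_le_of_natDegree_le hsd).trans_lt hlt

lemma aux_inj (n : ℕ) (d : ℚ[X]) (hd : d.degree < n) (h : auxL n d = 0) : d = 0 := by
  by_contra h0
  have hm : d.natDegree < n := (natDegree_lt_iff_degree_lt h0).2 hd
  have := (auxL_spec n d.natDegree d le_rfl).2
  rw [h, coeff_zero] at this
  rcases mul_eq_zero.1 this.symm with h1 | h1
  · exact auxE_ne hm h1
  · exact h0 (leadingCoeff_eq_zero.1 h1)

theorem eigenpolynomials_exist_unique :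
    (∀ n : ℕ, 1 ≤ n → ∃! P : Polynomial ℚ, PProp n P) ∧
    PProp 1 (X - C (1/4 : ℚ)) ∧
    PProp 2 (X ^ 2 - C (3/5 : ℚ) * X + C (1/15 : ℚ)) := by
  refine ⟨?_, ?_, ?_⟩
  · intro n _
    obtain ⟨h1, h2⟩ := auxL_spec n n (X ^ n) (natDegree_X_pow_le n)
    obtain ⟨r, hr, hr'⟩ := aux_surj n n le_rfl (auxL n (X ^ n)) (aux_deg_lt h1 (by simp [h2]))
    refine ⟨X ^ n - r, ⟨?_, ?_, ?_⟩, ?_⟩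
    · exact monic_X_pow_sub hr
    · rw [natDegree_sub_eq_left_of_natDegree_lt, natDegree_X_pow]
      rw [natDegree_X_pow]
      by_cases h0 : r = 0
      · simp [h0]; omega
      · exact (natDegree_lt_iff_degree_lt h0).2 hr
    · have : auxL n (X ^ n - r) = 0 := by rw [auxL_sub, hr', sub_self]
      exact sub_eq_zero.1 this
    · rintro Q ⟨hQ, hQd, hQe⟩
      have hQL : auxL n Q = 0 := sub_eq_zero.2 hQe
      have := aux_inj n (Q - (X ^ n - r)) (by
        have e : Q - (X ^ n - r) = (Q - X ^ n) + r := by ring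
        rw [e]
        refine (degree_add_le _ _).trans_lt (max_lt ?_ hr)
        apply aux_deg_lt
        · exact (natDegree_sub_le_of_le hQd.le (natDegree_X_pow_le n)).trans (by simp)
        · have : Q.coeff n = 1 := by rw [← hQd]; exact hQ
          simp [this]) (by rw [auxL_sub, auxL_sub, hr', hQL]; simp)
      exact sub_eq_zero.1 this
  · refine ⟨monic_X_sub_C _, natDegree_X_sub_C _, ?_⟩
    apply Polynomial.funext
    intro y
    simp
    ring
  · refine ⟨by monicity!, by compute_degree!, ?_⟩
    apply Polynomial.funext
    intro y
    simp
    ring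
end

section
/- Let n ≥ 1 and let P_n be the unique monic polynomial of degree n with 2·P_n(1−2y) − P_n(1−y) = (−1)^n(2^{n+1}−1)·P_n(y). Then the function x ↦ P_n(F(x)) on [0,1] is an eigenfunction of the transfer operator S with eigenvalue δ_n = (−1)^n/(2^{n+1}−1): for all x ∈ [0,1], Σ_{k=1}^∞ 2^{−k} P_n(F(1/(x+k))) = δ_n · P_n(F(x)). -/
open MeasureTheory Set Filter Polynomial

/-- If P_n is the monic degree-n polynomial with
    2P_n(1-2y) - P_n(1-y) = (-1)^n(2^{n+1}-1)P_n(y), then P_n ∘ F is an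
    eigenfunction of the transfer operator with eigenvalue (-1)^n/(2^{n+1}-1). -/
theorem eigenfunction_of_transfer
    (F : ℝ → ℝ) (hm : Monotone F) (hc : Continuous F)
    (hneg : ∀ x : ℝ, x ≤ 0 → F x = 0)
    (h1 : ∀ x : ℝ, 1 ≤ x → 2 * F x = F (x - 1) + 1)
    (h2 : ∀ x : ℝ, 0 ≤ x → x < 1 → 2 * F x = F (x / (1 - x)))
    (hlim : Tendsto F atTop (nhds 1))
    (n : ℕ) (hn : 1 ≤ n) (P : Polynomial ℝ)
    (hmonic : P.Monic) (hdeg : P.natDegree = n)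
    (hfe : 2 * P.comp (1 - 2 * X) - P.comp (1 - X) =
      C ((-1) ^ n * (2 ^ (n + 1) - 1) : ℝ) * P) :
    ∀ x ∈ Icc (0:ℝ) 1,
      ∑' k : ℕ, ((2:ℝ))⁻¹ ^ (k + 1) * P.eval (F (1 / (x + k + 1))) =
        ((-1) ^ n / (2 ^ (n + 1) - 1)) * P.eval (F x) := by
  have hF0 : ∀ x, 0 ≤ F x := by
    intro x
    rcases le_total x 0 with h | h
    · rw [hneg x h]
    · rw [← hneg 0 le_rfl]; exact hm h
  have hF1 : ∀ x, F x ≤ 1 := fun x => hm.ge_of_tendsto hlim x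
  have hD : ∀ m : ℕ, ∀ x : ℝ, 0 < x → |F x + F (1 / x) - 1| ≤ (2:ℝ)⁻¹ ^ m := by
    intro m
    induction m with
    | zero =>
      intro x hx
      have a := hF0 x
      have b := hF0 (1 / x)
      have c := hF1 x
      have d := hF1 (1 / x)
      rw [pow_zero, abs_le]
      constructor <;> linarith
    | succ m ih =>
      have key : ∀ x : ℝ, 1 < x → |F x + F (1 / x) - 1| ≤ (2:ℝ)⁻¹ ^ (m + 1) := by
        intro x hx
        have e1 := h1 x hx.le
        have hx0 : (0:ℝ) < x := by linarith
        have hx1 : x - 1 ≠ 0 := by linarith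
        have e2 := h2 (1 / x) (by positivity) (by rw [div_lt_one hx0]; exact hx)
        have e3 : 1 / x / (1 - 1 / x) = 1 / (x - 1) := by
          have : 1 - 1 / x = (x - 1) / x := by field_simp
          rw [this]; field_simp
        rw [e3] at e2
        have e4 := ih (x - 1) (by linarith)
        have e5 : F x + F (1 / x) - 1 = 2⁻¹ * (F (x - 1) + F (1 / (x - 1)) - 1) := by linarith
        rw [e5, abs_mul, pow_succ', abs_of_pos (by norm_num : (0:ℝ) < 2⁻¹)]
        linarith
      intro x hx
      rcases lt_trichotomy x 1 with h | h | h
      · have := key (1 / x) (by rw [lt_div_iff₀ hx]; linarith)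
        rw [one_div_one_div, add_comm (F (1 / x))] at this
        exact this
      · subst h
        have e := h1 1 le_rfl
        rw [sub_self, hneg 0 le_rfl] at e
        have : F 1 + F (1 / 1) - 1 = 0 := by rw [div_one]; linarith
        rw [this, abs_zero]; positivity
      · exact key x h
  have hsym : ∀ x : ℝ, 0 < x → F (1 / x) = 1 - F x := by
    intro x hx
    have ht : Tendsto (fun m : ℕ => (2:ℝ)⁻¹ ^ m) atTop (nhds 0) :=
      tendsto_pow_atTop_nhds_zero_of_lt_one (by norm_num) (by norm_num)
    have := ge_of_tendsto' ht (fun m => hD m x hx)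
    have := abs_eq_zero.mp (le_antisymm this (abs_nonneg _))
    linarith
  intro x hx
  have hshift : ∀ k : ℕ, F (x + k) = 1 - (2:ℝ)⁻¹ ^ k * (1 - F x) := by
    intro k
    induction k with
    | zero => simp
    | succ k ih =>
      have hk : (0:ℝ) ≤ k := Nat.cast_nonneg k
      have e := h1 (x + (k + 1)) (by linarith [hx.1])
      have : x + ((k:ℝ) + 1) - 1 = x + k := by ring
      rw [this, ih] at e
      push_cast
      rw [pow_succ]
      linarith
  have hval : ∀ k : ℕ, F (1 / (x + k + 1)) = (2:ℝ)⁻¹ ^ (k + 1) * (1 - F x) := by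
    intro k
    have hk : (0:ℝ) ≤ k := Nat.cast_nonneg k
    rw [hsym _ (by linarith [hx.1])]
    have := hshift (k + 1)
    push_cast at this
    rw [← add_assoc] at this
    rw [this]; ring
  set u := 1 - F x with hu
  have hfe' : ∀ y : ℝ, 2 * P.eval (1 - 2 * y) - P.eval (1 - y) =
      ((-1) ^ n * (2 ^ (n + 1) - 1)) * P.eval y := by
    intro y
    have := congrArg (Polynomial.eval y) hfe
    simpa [Polynomial.eval_comp] using this
  have hpow : (1:ℝ) < 2 ^ (n + 1) := one_lt_pow₀ (by norm_num) (by omega)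
  have hne : (2:ℝ) ^ (n + 1) - 1 ≠ 0 := by linarith
  set d : ℝ := (-1) ^ n / (2 ^ (n + 1) - 1) with hd
  have hdc : d * ((-1) ^ n * (2 ^ (n + 1) - 1)) = 1 := by
    have : ((-1:ℝ) ^ n) * (-1) ^ n = 1 := by rw [← mul_pow]; simp
    rw [hd]; field_simp; rw [sq]; exact this
  let a : ℕ → ℝ := fun k => (2:ℝ)⁻¹ ^ k * (d * P.eval (1 - (2:ℝ)⁻¹ ^ k * u))
  have hterm : ∀ k : ℕ, (2:ℝ)⁻¹ ^ (k + 1) * P.eval (F (1 / (x + k + 1))) = a k - a (k + 1) := by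
    intro k
    rw [hval k]
    have e := hfe' ((2:ℝ)⁻¹ ^ (k + 1) * u)
    have e2 : 2 * ((2:ℝ)⁻¹ ^ (k + 1) * u) = (2:ℝ)⁻¹ ^ k * u := by rw [pow_succ]; ring
    rw [e2] at e
    have e3 : (2:ℝ)⁻¹ ^ k = (2:ℝ)⁻¹ ^ (k + 1) * 2 := by rw [pow_succ]; ring
    have e4 : a k = (2:ℝ)⁻¹ ^ (k + 1) * 2 * (d * P.eval (1 - (2:ℝ)⁻¹ ^ k * u)) := by
      rw [← e3]
    rw [e4]
    change _ = _ - (2:ℝ)⁻¹ ^ (k + 1) * (d * P.eval (1 - (2:ℝ)⁻¹ ^ (k + 1) * u))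
    linear_combination (-(2:ℝ)⁻¹ ^ (k + 1) * d) * e -
      ((2:ℝ)⁻¹ ^ (k + 1) * P.eval ((2:ℝ)⁻¹ ^ (k + 1) * u)) * hdc
  have ht : Tendsto (fun m : ℕ => (2:ℝ)⁻¹ ^ m) atTop (nhds 0) :=
    tendsto_pow_atTop_nhds_zero_of_lt_one (by norm_num) (by norm_num)
  have hcont : Continuous (fun t : ℝ => d * P.eval (1 - t * u)) := by fun_prop
  have hO := ((hcont.tendsto 0).comp ht).isBigO_one ℝ
  have hs : Summable a := by
    refine summable_of_isBigO_nat (g := fun k => (2:ℝ)⁻¹ ^ k * 1) ?_ ?_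
    · simpa using summable_geometric_of_lt_one (r := (2:ℝ)⁻¹) (by norm_num) (by norm_num)
    · exact (Asymptotics.isBigO_refl _ _).mul hO
  have hs' : Summable (fun k => a (k + 1)) := (summable_nat_add_iff 1).mpr hs
  rw [tsum_congr hterm, hs.tsum_sub hs', hs.tsum_eq_zero_add]
  simp [a, hu]
end

section
/- Let λ ∈ ℝ∖{0,−1} and let G_λ : (−∞,0] → ℂ be continuous and bounded, satisfying 2·G_λ(z+1) = G_λ(z) + (1/(λz²))·G_λ(1/z) for all z < 0. Then (λ/(λ+1))·∫₀¹ G_λ(−x) dx = ∫₀¹ G_λ(−x)·F(x) dx. -/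
open MeasureTheory Set Filter


theorem qm_symm
    (F : ℝ → ℝ) (hm : Monotone F)
    (hneg : ∀ x : ℝ, x ≤ 0 → F x = 0)
    (h1 : ∀ x : ℝ, 1 ≤ x → 2 * F x = F (x - 1) + 1)
    (h2 : ∀ x : ℝ, 0 ≤ x → x < 1 → 2 * F x = F (x / (1 - x)))
    (hle : ∀ x, F x ≤ 1) (u : ℝ) (hu : 0 < u) : F u + F (1 / u) = 1 := by
  have hge : ∀ x, 0 ≤ F x := fun x => by
    have h := hm (min_le_left x 0)
    rwa [hneg _ (min_le_right x 0)] at h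
  have hstep : ∀ x : ℝ, 1 < x →
      2 * (F x + F (1 / x) - 1) = F (x - 1) + F (1 / (x - 1)) - 1 := by
    intro x hx
    have a := h1 x hx.le
    have b := h2 (1 / x) (by positivity) (by rw [div_lt_one (by linarith)]; exact hx)
    have e : 1 / x / (1 - 1 / x) = 1 / (x - 1) := by
      have : x ≠ 0 := by linarith
      have : x - 1 ≠ 0 := by linarith
      field_simp
    rw [e] at b
    linarith
  have key : ∀ n : ℕ, ∀ x : ℝ, 0 < x → |F x + F (1 / x) - 1| ≤ (1 / 2) ^ n := by
    intro n
    induction n with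
    | zero =>
      intro x _
      rw [pow_zero, abs_le]
      constructor <;> linarith [hge x, hge (1 / x), hle x, hle (1 / x)]
    | succ n ih =>
      have big : ∀ x : ℝ, 1 < x → |F x + F (1 / x) - 1| ≤ (1 / 2) ^ (n + 1) := by
        intro x hx
        have a := ih (x - 1) (by linarith)
        rw [← hstep x hx, abs_mul, abs_two] at a
        rw [pow_succ]
        linarith
      intro x hx
      rcases lt_trichotomy x 1 with h | h | h
      · have := big (1 / x) (by rw [lt_div_iff₀ hx]; linarith)
        rw [one_div_one_div, add_comm (F (1 / x))] at this
        exact this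
      · subst h
        have a := h1 1 le_rfl
        rw [sub_self, hneg 0 le_rfl] at a
        have : F 1 + F (1 / 1) - 1 = 0 := by rw [div_one]; linarith
        rw [this, abs_zero]
        positivity
      · exact big x h
  have hlim0 : Tendsto (fun n : ℕ => ((1:ℝ) / 2) ^ n) atTop (nhds 0) :=
    tendsto_pow_atTop_nhds_zero_of_lt_one (by norm_num) (by norm_num)
  have h0 : |F u + F (1 / u) - 1| ≤ 0 := ge_of_tendsto' hlim0 (fun n => key n u hu)
  have := abs_nonpos_iff.mp h0
  linarith

/-- For an eigenfunction G_λ of the transfer operator (continuous and bounded on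
    (-∞,0], satisfying 2G_λ(z+1) = G_λ(z) + (1/(λz²))G_λ(1/z) for z < 0),
    one has (λ/(λ+1))∫₀¹ G_λ(-x) dx = ∫₀¹ G_λ(-x) F(x) dx. -/
theorem eigenfunction_integral_identity
    (F : ℝ → ℝ) (hm : Monotone F) (hc : Continuous F)
    (hneg : ∀ x : ℝ, x ≤ 0 → F x = 0)
    (h1 : ∀ x : ℝ, 1 ≤ x → 2 * F x = F (x - 1) + 1)
    (h2 : ∀ x : ℝ, 0 ≤ x → x < 1 → 2 * F x = F (x / (1 - x)))
    (hlim : Tendsto F atTop (nhds 1))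
    (lam : ℝ) (hlam0 : lam ≠ 0) (hlam1 : lam ≠ -1)
    (G : ℝ → ℂ) (hGc : ContinuousOn G (Iic 0))
    (hGb : ∃ C : ℝ, ∀ z : ℝ, z ≤ 0 → ‖G z‖ ≤ C)
    (hGe : ∀ z : ℝ, z < 0 →
      2 * G (z + 1) = G z + ((1 / (lam * z ^ 2) : ℝ) : ℂ) * G (1 / z)) :
    ((lam / (lam + 1) : ℝ) : ℂ) * ∫ x in (0:ℝ)..1, G (-x) =
      ∫ x in (0:ℝ)..1, G (-x) * (F x : ℂ) := by
  have hle : ∀ x, F x ≤ 1 := hm.ge_of_tendsto hlim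
  have hsym := qm_symm F hm hneg h1 h2 hle
  obtain ⟨C, hC⟩ := hGb
  obtain ⟨g, hg⟩ : ∃ g : ℝ → ℂ, g = fun x => G (min (-x) 0) := ⟨_, rfl⟩
  have hgc : Continuous g := by
    rw [hg]
    exact hGc.comp_continuous (by fun_prop) (fun x => mem_Iic.mpr (min_le_right _ _))
  have hgb : ∀ x, ‖g x‖ ≤ C := fun x => by rw [hg]; exact hC _ (min_le_right _ _)
  have hgG : ∀ x, 0 ≤ x → g x = G (-x) := fun x hx => by
    rw [hg]; simp only; rw [min_eq_left (by linarith)]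
  have hlamC : (lam : ℂ) ≠ 0 := by exact_mod_cast hlam0
  have hFc : Continuous (fun x => (F x : ℂ)) := Complex.continuous_ofReal.comp hc
  have hge : ∀ x : ℝ, 0 ≤ x → 2 * g x = g (x + 1) +
      (lam : ℂ)⁻¹ * (((((x + 1) ^ 2)⁻¹ : ℝ) : ℂ) * g (1 / (x + 1))) := by
    intro x hx
    have h := hGe (-(x + 1)) (by linarith)
    rw [hgG x hx, hgG (x + 1) (by linarith), hgG (1 / (x + 1)) (by positivity)]
    rw [show -(x + 1) + 1 = -x by ring, show 1 / -(x + 1) = -(1 / (x + 1)) by rw [div_neg],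
      show 1 / (lam * (-(x + 1)) ^ 2) = lam⁻¹ * ((x + 1) ^ 2)⁻¹ by
        rw [neg_sq, one_div, mul_inv]] at h
    rw [h]; push_cast; ring
  obtain ⟨P, hP⟩ : ∃ P : ℝ → ℂ, P = fun x => g x * (1 - (F x : ℂ)) := ⟨_, rfl⟩
  obtain ⟨Q, hQ⟩ : ∃ Q : ℝ → ℂ, Q = fun x => g x * (F x : ℂ) := ⟨_, rfl⟩
  have hPc : Continuous P := by rw [hP]; fun_prop
  have hQc : Continuous Q := by rw [hQ]; fun_prop
  have hpt : ∀ x : ℝ, 0 ≤ x → P x = P (x + 1) -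
      (lam : ℂ)⁻¹ * ((-((x + 1) ^ 2)⁻¹ : ℝ) • Q (1 / (x + 1))) := by
    intro x hx
    have a := h1 (x + 1) (by linarith)
    have b := hsym (x + 1) (by linarith)
    rw [add_sub_cancel_right] at a
    have a' : (F x : ℂ) = 2 * (F (x + 1) : ℂ) - 1 := by
      rw [show F x = 2 * F (x + 1) - 1 by linarith]; push_cast; ring
    have b' : (F (1 / (x + 1)) : ℂ) = 1 - (F (x + 1) : ℂ) := by
      rw [show F (1 / (x + 1)) = 1 - F (x + 1) by linarith]; push_cast; ring
    have h := hge x hx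
    rw [hP, hQ, Complex.real_smul]
    simp only
    rw [b', a']
    push_cast at h ⊢
    linear_combination (1 - (F (x + 1) : ℂ)) * h
  have hsub : ∀ N : ℕ, ∫ x in (0:ℝ)..N, (-((x + 1) ^ 2)⁻¹ : ℝ) • Q (1 / (x + 1)) =
      ∫ u in (1:ℝ)..(1 / ((N : ℝ) + 1)), Q u := by
    intro N
    have hN : (0:ℝ) ≤ N := Nat.cast_nonneg N
    have := intervalIntegral.integral_deriv_smul_comp (a := 0) (b := (N : ℝ))
      (f := fun x : ℝ => 1 / (x + 1)) (f' := fun x : ℝ => -((x + 1) ^ 2)⁻¹) (g := Q)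
      (fun x hx => by
        rw [uIcc_of_le hN] at hx
        have h0 : x + 1 ≠ 0 := by linarith [hx.1]
        have := ((hasDerivAt_id x).add_const (1:ℝ)).fun_inv h0
        simpa [neg_div, one_div] using this)
      (by
        apply ContinuousOn.neg
        apply ContinuousOn.inv₀ (by fun_prop)
        intro x hx
        rw [uIcc_of_le hN] at hx
        have h0 : 0 < x + 1 := by linarith [hx.1]
        positivity) hQc
    simpa using this
  have hint : ∀ N : ℕ, (∫ x in (0:ℝ)..1, P x) - ∫ x in (N:ℝ)..(N + 1), P x =
      (lam : ℂ)⁻¹ * ∫ u in (1 / ((N : ℝ) + 1))..1, Q u := by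
    intro N
    have hN : (0:ℝ) ≤ N := Nat.cast_nonneg N
    have hi : ∀ a b, IntervalIntegrable P volume a b := fun a b => hPc.intervalIntegrable a b
    have e : ∫ x in (0:ℝ)..N, P x = ∫ x in (0:ℝ)..N, (P (x + 1) -
      (lam : ℂ)⁻¹ * ((-((x + 1) ^ 2)⁻¹ : ℝ) • Q (1 / (x + 1)))) := by
      apply intervalIntegral.integral_congr
      intro x hx
      rw [uIcc_of_le hN] at hx
      exact hpt x hx.1
    have hne : ∀ x ∈ uIcc (0:ℝ) N, x + 1 ≠ 0 := by
      intro x hx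
      rw [uIcc_of_le hN] at hx
      linarith [hx.1]
    rw [intervalIntegral.integral_sub, intervalIntegral.integral_const_mul, hsub,
      intervalIntegral.integral_comp_add_right, zero_add] at e
    · have s1 := intervalIntegral.integral_add_adjacent_intervals (hi 0 1) (hi 1 (N + 1))
      have s2 := intervalIntegral.integral_add_adjacent_intervals (hi 0 N) (hi N (N + 1))
      rw [intervalIntegral.integral_symm 1 (1 / ((N : ℝ) + 1))]
      linear_combination s1 - s2 + e
    · exact (hPc.comp (by fun_prop)).intervalIntegrable _ _
    · apply ContinuousOn.intervalIntegrable
      apply ContinuousOn.mul continuousOn_const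
      apply ContinuousOn.fun_smul
      · apply ContinuousOn.neg
        apply ContinuousOn.inv₀ (by fun_prop)
        intro x hx
        exact pow_ne_zero _ (hne x hx)
      · apply hQc.comp_continuousOn
        exact ContinuousOn.div continuousOn_const (by fun_prop) hne
  have hC0 : 0 ≤ C := (norm_nonneg _).trans (hgb 0)
  have hNat : Tendsto (fun N : ℕ => F N) atTop (nhds 1) := hlim.comp tendsto_natCast_atTop_atTop
  have ht1 : Tendsto (fun N : ℕ => ∫ x in (N:ℝ)..(N + 1), P x) atTop (nhds 0) := by
    apply squeeze_zero_norm (a := fun N : ℕ => C * (1 - F N))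
    · intro N
      have := intervalIntegral.norm_integral_le_of_norm_le_const (a := (N:ℝ)) (b := N + 1)
        (f := P) (C := C * (1 - F N)) (fun x hx => by
          rw [uIoc_of_le (by linarith)] at hx
          rw [hP]
          simp only
          rw [norm_mul]
          apply mul_le_mul (hgb x) _ (norm_nonneg _) hC0
          rw [← Complex.ofReal_one, ← Complex.ofReal_sub, Complex.norm_real, Real.norm_eq_abs,
            abs_of_nonneg (by linarith [hle x])]
          linarith [hm hx.1.le])
      simpa using this
    · have := (hNat.const_sub 1).const_mul C
      simpa using this
  have ht2 : Tendsto (fun N : ℕ => ∫ u in (1 / ((N : ℝ) + 1))..1, Q u) atTop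
      (nhds (∫ u in (0:ℝ)..1, Q u)) := by
    have hcont : Continuous (fun b : ℝ => ∫ u in (1:ℝ)..b, Q u) :=
      intervalIntegral.continuous_primitive (fun a b => hQc.intervalIntegrable a b) 1
    have := ((hcont.tendsto 0).comp tendsto_one_div_add_atTop_nhds_zero_nat).neg
    rw [← intervalIntegral.integral_symm] at this
    refine this.congr fun N => ?_
    simp only [Function.comp]
    rw [← intervalIntegral.integral_symm]
  have hfin : (∫ x in (0:ℝ)..1, P x) = (lam : ℂ)⁻¹ * ∫ u in (0:ℝ)..1, Q u := by
    have l := (tendsto_const_nhds (x := ∫ x in (0:ℝ)..1, P x)).sub ht1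
    rw [sub_zero] at l
    exact tendsto_nhds_unique l
      ((ht2.const_mul (lam : ℂ)⁻¹).congr fun N => (hint N).symm)
  have hA : ∫ x in (0:ℝ)..1, G (-x) = ∫ x in (0:ℝ)..1, g x := by
    apply intervalIntegral.integral_congr
    intro x hx
    rw [uIcc_of_le zero_le_one] at hx
    exact (hgG x hx.1).symm
  have hB : ∫ x in (0:ℝ)..1, G (-x) * (F x : ℂ) = ∫ x in (0:ℝ)..1, Q x := by
    apply intervalIntegral.integral_congr
    intro x hx
    rw [uIcc_of_le zero_le_one] at hx
    rw [hQ]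
    simp only
    rw [hgG x hx.1]
  have hPQ : ∫ x in (0:ℝ)..1, P x = (∫ x in (0:ℝ)..1, g x) - ∫ x in (0:ℝ)..1, Q x := by
    rw [← intervalIntegral.integral_sub (hgc.intervalIntegrable _ _) (hQc.intervalIntegrable _ _)]
    apply intervalIntegral.integral_congr
    intro x _
    rw [hP, hQ]
    simp only
    ring
  rw [hA, hB]
  rw [hPQ] at hfin
  have hl1 : (lam : ℂ) + 1 ≠ 0 := by
    intro h
    apply hlam1
    have : ((lam + 1 : ℝ) : ℂ) = 0 := by push_cast; exact h
    have := Complex.ofReal_eq_zero.mp this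
    linarith
  rw [sub_eq_iff_eq_add] at hfin
  rw [hfin]
  push_cast
  field_simp
  try ring
end
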